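/- arXiv:1503.07688 — 8 statements merged into one kernel-verified Lean document; each statement's English description precedes it below -/
import Mathlib

section
/- Let a, C, n be natural numbers with a ≥ 1, C ≥ 1 and n > 1, and set Z = ((a+C)^n − a^n)/C (this is a natural number, since C divides (a+C)^n − a^n). If Z is a prime number, then n is a prime number. -/
/-!
If `n = r * s` with `r, s ≥ 2`, then with `b = a + C`,
`(b ^ n - a ^ n) / C = ((b ^ r - a ^ r) / (b - a)) * ((b ^ n - a ^ n) / (b ^ r - a ^ r))`.
Both factors are quotients of the form `(y ^ k - x ^ k) / (y - x)` with `1 ≤ x < y` and `k ≥ 2`,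
the second one for `x = a ^ r`, `y = b ^ r`, `k = s`. Such a quotient is an integer greater than
`1` (`exists_quotient_gt_one`), so the left-hand side is composite.
-/

/-- The quotient `u = ((x + d) ^ k - x ^ k) / d` is a natural number exceeding `1`, stated without
subtraction or division. -/
theorem exists_quotient_gt_one (x d k : ℕ) (hx : 1 ≤ x) (hd : 1 ≤ d) (hk : 2 ≤ k) :
    ∃ u, 1 < u ∧ (x + d) ^ k = x ^ k + d * u := by
  have hle : x ^ k ≤ (x + d) ^ k := Nat.pow_le_pow_left (Nat.le_add_right x d) k
  obtain ⟨u, hu⟩ := Nat.sub_dvd_pow_sub_pow (x + d) x k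
  rw [Nat.add_sub_cancel_left] at hu
  have heq : (x + d) ^ k = x ^ k + d * u := by omega
  refine ⟨u, ?_, heq⟩
  have hlt : x ^ k + d * 1 < (x + d) ^ k := by
    obtain ⟨m, rfl⟩ := Nat.exists_eq_add_of_le' hk
    have h1 : x ^ (m + 1) + 1 ≤ (x + d) ^ (m + 1) :=
      Nat.pow_lt_pow_left (by omega) (by omega)
    calc x ^ (m + 2) + d * 1
        < x ^ (m + 2) + d * 1 + (x + d * x ^ (m + 1)) := by omega
      _ = (x ^ (m + 1) + 1) * (x + d) := by ring
      _ ≤ (x + d) ^ (m + 1) * (x + d) := Nat.mul_le_mul_right _ h1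
      _ = (x + d) ^ (m + 2) := by ring
  rw [heq] at hlt
  exact Nat.lt_of_mul_lt_mul_left (Nat.lt_of_add_lt_add_left hlt)

/-- Generalized Mersenne theorem: if `Z = ((a+C)^n - a^n)/C` is prime, then `n` is prime. -/
theorem stmt_0 (a C n : ℕ) (ha : 1 ≤ a) (hC : 1 ≤ C) (hn : 1 < n)
    (hZ : Nat.Prime (((a + C) ^ n - a ^ n) / C)) : Nat.Prime n := by
  by_contra hnp
  obtain ⟨r, s, hr, hs, rfl⟩ := (Nat.not_prime_iff_exists_mul_eq hn).1 hnp
  have hr2 : 2 ≤ r := by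
    by_contra! h
    interval_cases r <;> omega
  have hs2 : 2 ≤ s := by
    by_contra! h
    interval_cases s <;> omega
  obtain ⟨u, hu, hur⟩ := exists_quotient_gt_one a C r ha hC hr2
  obtain ⟨v, hv, hvs⟩ := exists_quotient_gt_one (a ^ r) (C * u) s (Nat.one_le_pow _ _ ha)
    (Nat.mul_pos hC (by omega)) hs2
  have hprod : ((a + C) ^ (r * s) - a ^ (r * s)) / C = u * v := by
    rw [pow_mul, pow_mul, hur, hvs, Nat.add_sub_cancel_left, mul_assoc,
      Nat.mul_div_cancel_left _ hC]
  rw [hprod] at hZ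
  exact Nat.not_prime_mul (by omega) (by omega) hZ
end

section
/- Let a and n be natural numbers with a ≥ 1 and n > 1. If (a+1)^n − a^n is a prime number, then n is a prime number. -/
/-!
If `n = m * k` with `1 < m < n`, then `Z m = (a + 1) ^ m - a ^ m` divides `Z n`, being a difference
`x - y` that divides `x ^ k - y ^ k`. Since `Z` is strictly increasing and `Z 1 = 1`, we have
`1 < Z m < Z n`, so `Z n` is not prime.
-/

/-- The natural-number subtraction never truncates here. The growth comes from the recursion
`Z (m + 1) = (a + 1) * Z m + a ^ m`. -/
lemma strictMono_succ_pow_sub_pow {a : ℕ} (ha : 1 ≤ a) :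
    StrictMono fun m : ℕ => (a + 1) ^ m - a ^ m := by
  refine strictMono_nat_of_lt_succ fun m => ?_
  obtain ⟨d, hd⟩ := Nat.exists_eq_add_of_le (Nat.pow_le_pow_left (Nat.le_succ a) m)
  have hd' : (a + 1) ^ m = a ^ m + d := hd
  have hrec : (a + 1) ^ (m + 1) = a ^ (m + 1) + ((a + 1) * d + a ^ m) := by
    rw [pow_succ, hd', pow_succ]; ring
  have hpos : 0 < a ^ m := pow_pos ha m
  simp only [hrec, hd', Nat.add_sub_cancel_left]
  nlinarith [Nat.zero_le (a * d)]

/-- If `(a+1)^n - a^n` is prime, then `n` is prime. -/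
theorem stmt_2 (a n : ℕ) (ha : 1 ≤ a) (hn : 1 < n)
    (hZ : Nat.Prime ((a + 1) ^ n - a ^ n)) : Nat.Prime n := by
  have hmono := strictMono_succ_pow_sub_pow ha
  refine Nat.prime_def_lt.2 ⟨hn, fun m hmn hdvd => ?_⟩
  by_contra hm
  have hm1 : 1 < m := by
    have := Nat.pos_of_dvd_of_pos hdvd (by omega)
    omega
  have h1 := hmono hm1
  have h2 := hmono hmn
  have hZdvd : (a + 1) ^ m - a ^ m ∣ (a + 1) ^ n - a ^ n := by
    obtain ⟨k, rfl⟩ := hdvd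
    rw [pow_mul, pow_mul]
    exact Nat.sub_dvd_pow_sub_pow _ _ k
  simp only [pow_one, Nat.add_sub_cancel_left] at h1 h2
  rcases (Nat.dvd_prime hZ).1 hZdvd with h | h <;> omega
end

section
/- Let a be a natural number and let K be a natural number with K ≥ 1 and 2K + 1 < a. Suppose that for every odd prime p with p² ≤ a and every natural number m satisfying m ≥ (p−1)/2 and p·(2m+1) < a, we have K ≠ p·m + (p−1)/2. Then R = 2K + 1 is a prime number. -/
/-- If `K ≥ 1`, `2K+1 < a`, and `K` avoids all values `p*m + (p-1)/2` for odd primes `p`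
with `p² ≤ a` and naturals `m` with `(p-1)/2 ≤ m` and `p*(2m+1) < a`,
then `R = 2K+1` is prime. -/
theorem stmt_5 (a K : ℕ) (hK : 1 ≤ K) (hKa : 2 * K + 1 < a)
    (h : ∀ p m : ℕ, Nat.Prime p → Odd p → p ^ 2 ≤ a →
      (p - 1) / 2 ≤ m → p * (2 * m + 1) < a → K ≠ p * m + (p - 1) / 2) :
    Nat.Prime (2 * K + 1) := by
  by_contra hR
  -- The least prime factor of a composite `R = 2K+1` is a forbidden `p`.
  have hp : (2 * K + 1).minFac.Prime := Nat.minFac_prime (by lia)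
  have hsq : (2 * K + 1).minFac ^ 2 ≤ 2 * K + 1 := Nat.minFac_sq_le_self (by lia) hR
  obtain ⟨q, hq⟩ := Nat.minFac_dvd (2 * K + 1)
  generalize (2 * K + 1).minFac = p at hp hsq hq
  have hodd : Odd (p * q) := hq ▸ odd_two_mul_add_one K
  obtain ⟨hpo, hqo⟩ := Nat.odd_mul.mp hodd
  have hpq : p ≤ q := by
    rw [hq, sq] at hsq
    exact Nat.le_of_mul_le_mul_left hsq hp.pos
  obtain ⟨m, rfl⟩ := hqo
  refine h p m hp hpo (by lia) (by lia) (by lia) ?_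
  -- With `p = 2t+1`, the factorization `2K+1 = p(2m+1)` reads `K = pm + t`.
  obtain ⟨t, rfl⟩ := hpo
  have ht : (2 * t + 1 - 1) / 2 = t := by lia
  rw [ht]
  linarith
end

section
/- Let a be a natural number, let P be the product of all primes p with p² ≤ a, let K be a natural number with K ≥ 1, let s₁, s₂ ∈ {−1, 1}, let F be a finite set of primes each of which satisfies q² > a, and for each q ∈ F let e_q be a natural number; set Q = ∏_{q ∈ F} q^{e_q}. Define the integer R = s₁·K·P + s₂·Q. If 1 < R < a, then R is a prime number. -/
/-!
If `R` were composite, its least prime factor `p` would satisfy `p ^ 2 ≤ R < a`, hence `p ∣ P`,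
and therefore `p` would divide `s₂ * Q = R - s₁ * K * P`. Then `p` is one of the primes `q` of `F`,
which contradicts `a < q ^ 2`.
-/

/-- Relation 1: with `P` the product of all primes `p` with `p² ≤ a`, `K ≥ 1`,
signs `s₁, s₂ ∈ {-1, 1}`, and `Q` a finite product of powers of primes `q` with `q² > a`,
if `R = s₁·K·P + s₂·Q` satisfies `1 < R < a`, then `R` is prime. -/
theorem stmt_7 (a : ℕ)
    (P : ℕ) (hP : P = ∏ p ∈ (Finset.range (a + 1)).filter (fun p => Nat.Prime p ∧ p ^ 2 ≤ a), p)
    (K : ℕ) (hK : 1 ≤ K)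
    (s₁ s₂ : ℤ) (hs₁ : s₁ = 1 ∨ s₁ = -1) (hs₂ : s₂ = 1 ∨ s₂ = -1)
    (F : Finset ℕ) (hF : ∀ q ∈ F, Nat.Prime q ∧ a < q ^ 2)
    (e : ℕ → ℕ) (Q : ℕ) (hQ : Q = ∏ q ∈ F, q ^ e q)
    (R : ℤ) (hR : R = s₁ * K * P + s₂ * Q)
    (h1 : 1 < R) (h2 : R < a) : Prime R := by
  lift R to ℕ using by omega
  rw [← Nat.prime_iff_prime_int]
  have h1' : 1 < R := by exact_mod_cast h1
  have h2' : R < a := by exact_mod_cast h2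
  by_contra hnp
  have hp : (Nat.minFac R).Prime := Nat.minFac_prime (by omega)
  have hsq : Nat.minFac R ^ 2 ≤ R := Nat.minFac_sq_le_self (by omega) hnp
  have hdR : Nat.minFac R ∣ R := Nat.minFac_dvd R
  generalize Nat.minFac R = p at hp hsq hdR
  have hpP : p ∣ P := by
    rw [hP]
    refine Finset.dvd_prod_of_mem (fun p => p) ?_
    simp only [Finset.mem_filter, Finset.mem_range]
    exact ⟨by nlinarith [hp.two_le], hp, by omega⟩
  have hsQ : (p : ℤ) ∣ s₂ * Q := by
    have hKP : (p : ℤ) ∣ s₁ * K * P := (Int.natCast_dvd_natCast.mpr hpP).mul_left _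
    rw [← dvd_add_right hKP, ← hR]
    exact Int.natCast_dvd_natCast.mpr hdR
  have hpQ : p ∣ Q := by
    rcases hs₂ with rfl | rfl
    · exact Int.natCast_dvd_natCast.mp (by simpa using hsQ)
    · exact Int.natCast_dvd_natCast.mp (by simpa using hsQ)
  rw [hQ, hp.prime.dvd_finsetProd_iff] at hpQ
  obtain ⟨q, hqF, hpq⟩ := hpQ
  obtain ⟨hq, haq⟩ := hF q hqF
  have hpe : p = q := (Nat.prime_dvd_prime_iff_eq hp hq).mp (hp.dvd_of_dvd_pow hpq)
  subst hpe
  omega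
end

section
/- Let a be a natural number and let d = ⌊√a⌋. Let k₁ be a natural number with k₁ ≥ 1, let s₁, s₂ ∈ {−1, 1}, let F be a finite set of primes each of which satisfies q² > a, and for each q ∈ F let e_q be a natural number; set Q = ∏_{q ∈ F} q^{e_q}. Define the integer R = s₁·k₁·d! + s₂·Q. If 1 < R < a, then R is a prime number. -/
/-!
If `R` were composite, its least prime factor `p` would satisfy `p² ≤ R < a`, hence `p ≤ ⌊√a⌋ = d`
and `p ∣ d!`. Then `p` divides `R ∓ k₁·d! = ±Q`, so `p` is one of the primes `q` with `q² > a`,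
which is impossible.
-/

/-- Special case of Relation 1: with `d = ⌊√a⌋`, `k₁ ≥ 1`, signs `s₁, s₂ ∈ {-1, 1}`,
and `Q` a finite product of powers of primes `q` with `q² > a`,
if `R = s₁·k₁·d! + s₂·Q` satisfies `1 < R < a`, then `R` is prime. -/
theorem stmt_8 (a : ℕ) (d : ℕ) (hd : d = Nat.sqrt a)
    (k₁ : ℕ) (hk₁ : 1 ≤ k₁)
    (s₁ s₂ : ℤ) (hs₁ : s₁ = 1 ∨ s₁ = -1) (hs₂ : s₂ = 1 ∨ s₂ = -1)
    (F : Finset ℕ) (hF : ∀ q ∈ F, Nat.Prime q ∧ a < q ^ 2)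
    (e : ℕ → ℕ) (Q : ℕ) (hQ : Q = ∏ q ∈ F, q ^ e q)
    (R : ℤ) (hR : R = s₁ * k₁ * (Nat.factorial d) + s₂ * Q)
    (h1 : 1 < R) (h2 : R < a) : Prime R := by
  lift R to ℕ using by omega with n
  rw [← Nat.prime_iff_prime_int]
  by_contra hn
  -- The witness is `p = n.minFac`: from `p² ≤ n < a` it follows that `p ≤ d`.
  have hp : n.minFac.Prime := Nat.minFac_prime (by omega)
  have hsq : n.minFac ^ 2 ≤ n := Nat.minFac_sq_le_self (by omega) hn
  have hle : n.minFac ≤ d := by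
    rw [hd, Nat.le_sqrt']
    omega
  have hfact : (n.minFac : ℤ) ∣ (d.factorial : ℤ) :=
    Int.natCast_dvd_natCast.2 (Nat.dvd_factorial hp.pos hle)
  have hdvd : (n.minFac : ℤ) ∣ s₂ * Q := by
    have h : (n.minFac : ℤ) ∣ (n : ℤ) := Int.natCast_dvd_natCast.2 n.minFac_dvd
    rw [hR] at h
    exact (dvd_add_right (hfact.mul_left _)).1 h
  have hdQ : n.minFac ∣ Q := by
    rw [← Int.natCast_dvd_natCast]
    rcases hs₂ with rfl | rfl <;> simpa using hdvd
  -- A prime dividing the product divides some prime `q ∈ F`, hence equals it.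
  rw [hQ, hp.prime.dvd_finsetProd_iff] at hdQ
  obtain ⟨q, hq, hpq⟩ := hdQ
  have heq := (Nat.prime_dvd_prime_iff_eq hp (hF q hq).1).1 (hp.dvd_of_dvd_pow hpq)
  have hlt := (hF q hq).2
  rw [← heq] at hlt
  omega
end

section
/- Let a be a natural number, and let the set of all primes p with p² ≤ a be partitioned into two disjoint sets S₁ and S₂ whose union is the whole set. Let k₁, k₂ be natural numbers with k₁ ≥ 1 and k₂ ≥ 1, let k₃ be a natural number (possibly 0), and let s₁, s₂, s₃ ∈ {−1, 1}. Assume no prime in S₂ divides k₁ and no prime in S₁ divides k₂. Define the integer R = s₁·(∏_{p∈S₁} p)·k₁ + s₂·(∏_{p∈S₂} p)·k₂ + s₃·(∏_{p∈S₁∪S₂} p)·k₃. If 1 < R < a, then R is a prime number. -/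
/-!
A composite `R > 1` has a prime factor `q` with `q² ≤ R < a`, so `q` lies in `S₁` or in `S₂`.
By `not_dvd_of_mem` it cannot divide `R`: exactly one of the first two terms of `R` is
divisible by `q`, and the third one always is.
-/

/-- A prime `q` of `S` divides the terms built on `∏ S` and `∏ (S ∪ T)`, but not the term
`t * ∏ T * l`, hence not their sum. -/
lemma not_dvd_of_mem {S T : Finset ℕ} (hdisj : Disjoint S T)
    (hprime : ∀ p ∈ S ∪ T, Nat.Prime p) {q l : ℕ} (hq : q ∈ S) (hl : ¬ q ∣ l)
    {t : ℤ} (ht : t = 1 ∨ t = -1) (s k u : ℤ) :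
    ¬ (q : ℤ) ∣ s * (∏ p ∈ S, (p : ℤ)) * k + t * (∏ p ∈ T, (p : ℤ)) * l +
      u * (∏ p ∈ S ∪ T, (p : ℤ)) := by
  intro h
  have hqp : Nat.Prime q := hprime q (Finset.mem_union_left _ hq)
  have hqZ : Prime (q : ℤ) := Nat.prime_iff_prime_int.mp hqp
  have hd₁ : (q : ℤ) ∣ s * (∏ p ∈ S, (p : ℤ)) * k :=
    ((Finset.dvd_prod_of_mem (fun p : ℕ => (p : ℤ)) hq).mul_left s).mul_right k
  have hd₃ : (q : ℤ) ∣ u * ∏ p ∈ S ∪ T, (p : ℤ) :=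
    (Finset.dvd_prod_of_mem (fun p : ℕ => (p : ℤ)) (Finset.mem_union_left T hq)).mul_left u
  have hd₂ := (dvd_add_right hd₁).mp ((dvd_add_left hd₃).mp h)
  rcases hqZ.dvd_or_dvd hd₂ with h' | h'
  · rcases hqZ.dvd_or_dvd h' with h'' | h''
    · exact hqZ.not_isUnit (isUnit_of_dvd_unit h'' (Int.isUnit_iff.mpr ht))
    · obtain ⟨p, hp, hqp'⟩ := (hqZ.dvd_finsetProd_iff _).mp h''
      have heq : q = p := (Nat.prime_dvd_prime_iff_eq hqp
        (hprime p (Finset.mem_union_right _ hp))).mp (Int.natCast_dvd_natCast.mp hqp')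
      exact Finset.disjoint_left.mp hdisj hq (heq ▸ hp)
  · exact hl (Int.natCast_dvd_natCast.mp h')


/-- Relation 2: the primes `p` with `p² ≤ a` are partitioned as `S₁ ∪ S₂`;
`k₁, k₂ ≥ 1` with no prime of `S₂` dividing `k₁` and no prime of `S₁` dividing `k₂`,
`k₃ ≥ 0`, and signs `s₁, s₂, s₃ ∈ {-1, 1}`. If
`R = s₁·(∏ S₁)·k₁ + s₂·(∏ S₂)·k₂ + s₃·(∏ S₁∪S₂)·k₃` satisfies `1 < R < a`,
then `R` is prime. -/
theorem stmt_9 (a : ℕ) (S₁ S₂ : Finset ℕ)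
    (hdisj : Disjoint S₁ S₂)
    (hunion : S₁ ∪ S₂ = (Finset.range (a + 1)).filter (fun p => Nat.Prime p ∧ p ^ 2 ≤ a))
    (k₁ k₂ k₃ : ℕ) (hk₁ : 1 ≤ k₁) (hk₂ : 1 ≤ k₂)
    (hk₁div : ∀ p ∈ S₂, ¬ p ∣ k₁) (hk₂div : ∀ p ∈ S₁, ¬ p ∣ k₂)
    (s₁ s₂ s₃ : ℤ) (hs₁ : s₁ = 1 ∨ s₁ = -1) (hs₂ : s₂ = 1 ∨ s₂ = -1) (hs₃ : s₃ = 1 ∨ s₃ = -1)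
    (R : ℤ)
    (hR : R = s₁ * (∏ p ∈ S₁, (p : ℤ)) * k₁ + s₂ * (∏ p ∈ S₂, (p : ℤ)) * k₂ +
      s₃ * (∏ p ∈ S₁ ∪ S₂, (p : ℤ)) * k₃)
    (h1 : 1 < R) (h2 : R < a) : Prime R := by
  have hprime : ∀ p ∈ S₁ ∪ S₂, Nat.Prime p := by
    intro p hp
    rw [hunion, Finset.mem_filter] at hp
    exact hp.2.1
  lift R to ℕ using by omega with n
  rw [← Nat.prime_iff_prime_int]
  by_contra hn
  have hn1 : 1 < n := by exact_mod_cast h1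
  have hna : n < a := by exact_mod_cast h2
  have hqp : Nat.Prime n.minFac := Nat.minFac_prime (by omega)
  have hsq : n.minFac ^ 2 ≤ n := Nat.minFac_sq_le_self (by omega) hn
  have hmem : n.minFac ∈ S₁ ∪ S₂ := by
    rw [hunion, Finset.mem_filter, Finset.mem_range]
    have := Nat.minFac_le (n := n) (by omega)
    exact ⟨by omega, hqp, by omega⟩
  have hdvd : (n.minFac : ℤ) ∣ (n : ℤ) := Int.natCast_dvd_natCast.mpr n.minFac_dvd
  rw [hR] at hdvd
  rcases Finset.mem_union.mp hmem with hq | hq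
  · refine not_dvd_of_mem hdisj hprime hq (hk₂div _ hq) hs₂ s₁ k₁ (s₃ * k₃) ?_
    convert hdvd using 1
    ring
  · refine not_dvd_of_mem hdisj.symm (by rwa [Finset.union_comm]) hq (hk₁div _ hq) hs₁
      s₂ k₂ (s₃ * k₃) ?_
    rw [Finset.union_comm S₂ S₁]
    convert hdvd using 1
    ring
end

section
/- Let a be a natural number and let p₁, p₂, …, p_n be all the primes p with p² ≤ a. For each i = 1, …, n let k_i be a natural number with k_i ≥ 1 such that p_i does not divide k_i, let k_{n+1} be a natural number (possibly 0), and let s₁, …, s_n, s_{n+1} ∈ {−1, 1}. Define the integer R = Σ_{i=1}^{n} s_i · (∏_{j≠i} p_j) · k_i + s_{n+1} · (∏_{j=1}^{n} p_j) · k_{n+1}, where ∏_{j≠i} p_j is the product of all the primes p₁, …, p_n except p_i. If 1 < R < a, then R is a prime number. -/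
/-!
A composite `R` with `1 < R < a` has a prime factor `q` with `q ^ 2 ≤ R < a`, so `q = p i` for
some `i`. Modulo `p i` every summand of `R` vanishes except the `i`-th, which is
`± (∏_{j ≠ i} p j) * k i`; since the `p j` are distinct primes and `p i ∤ k i`, it is nonzero
modulo `p i`. Hence `p i ∤ R`, a contradiction.
-/

/-- Relation 3: `p 1, …, p n` enumerate all primes `p` with `p² ≤ a`; each coefficient
`k i ≥ 1` is not divisible by `p i`, `k' ≥ 0`, and signs are `±1`. If
`R = Σ i, s i · (∏_{j ≠ i} p j) · k i + s' · (∏ j, p j) · k'` satisfies `1 < R < a`,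
then `R` is prime. -/
theorem stmt_10 (a n : ℕ) (p : Fin n → ℕ)
    (hinj : Function.Injective p)
    (hall : ∀ q : ℕ, (Nat.Prime q ∧ q ^ 2 ≤ a) ↔ ∃ i, p i = q)
    (k : Fin n → ℕ) (hk : ∀ i, 1 ≤ k i) (hkdiv : ∀ i, ¬ p i ∣ k i)
    (k' : ℕ)
    (s : Fin n → ℤ) (hs : ∀ i, s i = 1 ∨ s i = -1)
    (s' : ℤ) (hs' : s' = 1 ∨ s' = -1)
    (R : ℤ)
    (hR : R = (∑ i, s i * (∏ j ∈ Finset.univ.erase i, (p j : ℤ)) * k i) +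
      s' * (∏ j, (p j : ℤ)) * k')
    (h1 : 1 < R) (h2 : R < a) : Prime R := by
  have hp : ∀ i, Nat.Prime (p i) := fun i => ((hall (p i)).2 ⟨i, rfl⟩).1
  have key : ∀ i, ¬ (p i : ℤ) ∣ R := by
    intro i hi
    have hpi : Prime (p i : ℤ) := Nat.prime_iff_prime_int.1 (hp i)
    have hprod : (p i : ℤ) ∣ s' * (∏ j, (p j : ℤ)) * k' :=
      ((Finset.dvd_prod_of_mem (fun j => (p j : ℤ)) (Finset.mem_univ i)).mul_left _).mul_right _
    have hrest : (p i : ℤ) ∣ ∑ l ∈ Finset.univ.erase i,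
        s l * (∏ j ∈ Finset.univ.erase l, (p j : ℤ)) * k l := by
      refine Finset.dvd_sum fun l hl => ?_
      have hil : i ∈ Finset.univ.erase l :=
        Finset.mem_erase.2 ⟨(Finset.ne_of_mem_erase hl).symm, Finset.mem_univ i⟩
      exact ((Finset.dvd_prod_of_mem (fun j => (p j : ℤ)) hil).mul_left _).mul_right _
    rw [hR, dvd_add_left hprod, ← Finset.add_sum_erase _ _ (Finset.mem_univ i),
      dvd_add_left hrest] at hi
    rcases hpi.dvd_or_dvd hi with h | h
    · rcases hpi.dvd_or_dvd h with h | h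
      · refine hpi.not_unit (isUnit_of_dvd_unit h ?_)
        rcases hs i with e | e <;> simp [e]
      · obtain ⟨j, hj, hij⟩ := (hpi.dvd_finset_prod_iff _).1 h
        have e : p i = p j :=
          (Nat.prime_dvd_prime_iff_eq (hp i) (hp j)).1 (Int.natCast_dvd_natCast.1 hij)
        exact Finset.ne_of_mem_erase hj (hinj e).symm
    · exact hkdiv i (Int.natCast_dvd_natCast.1 h)
  lift R to ℕ using by linarith
  rw [← Nat.prime_iff_prime_int]
  by_contra hnp
  have h1' : 1 < R := by exact_mod_cast h1
  have h2' : R < a := by exact_mod_cast h2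
  have hsq : R.minFac ^ 2 ≤ R := Nat.minFac_sq_le_self (by omega) hnp
  obtain ⟨i, hi⟩ := (hall R.minFac).1 ⟨Nat.minFac_prime (by omega), by omega⟩
  exact key i (by rw [hi]; exact_mod_cast R.minFac_dvd)
end

section
/- Let a be an odd natural number with a ≥ 5, and let c be the product of all odd natural numbers from 1 up to a − 2, i.e. c = 1·3·5···(a−2). Let k be an odd natural number and let n be a natural number with n ≥ 1. If a < c·k − 2^n ≤ a² − 1, then c·k − 2^n is a prime number. -/
/-! Write `N = c * k - 2 ^ n`, which is odd since `c` and `k` are odd and `n ≥ 1`. If `N` were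
composite, its least prime factor `p` would satisfy `p ^ 2 ≤ N < a ^ 2`, so `p < a`. As `N` and `a`
are odd, `p` is odd and `p ≤ a - 2`, so `p` is one of the factors of `c`. Then `p` divides
`c * k - N = 2 ^ n`, which is impossible for an odd prime. -/

/-- Algorithm step: for odd `a ≥ 5`, `c` the product of all odd naturals up to `a - 2`,
`k` odd, and `n ≥ 1`, if `a < c·k - 2^n ≤ a² - 1` then `c·k - 2^n` is prime. -/
theorem stmt_11 (a : ℕ) (ha : Odd a) (ha5 : 5 ≤ a)
    (c : ℕ) (hc : c = ∏ m ∈ (Finset.range (a - 1)).filter (fun m => Odd m), m)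
    (k : ℕ) (hk : Odd k) (n : ℕ) (hn : 1 ≤ n)
    (h1 : (a : ℤ) < (c : ℤ) * k - 2 ^ n)
    (h2 : (c : ℤ) * k - 2 ^ n ≤ (a : ℤ) ^ 2 - 1) :
    Prime ((c : ℤ) * k - 2 ^ n) := by
  obtain ⟨N, hN⟩ := Int.eq_ofNat_of_zero_le (a := (c : ℤ) * k - 2 ^ n) (by linarith)
  rw [hN] at h1 h2 ⊢
  have hsum : c * k = N + 2 ^ n := by zify; linarith
  have haN : a < N := by exact_mod_cast h1
  have hNa : N < a ^ 2 := by zify; linarith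
  rw [← Nat.prime_iff_prime_int]
  by_contra hcomp
  have hp : N.minFac.Prime := Nat.minFac_prime (by omega)
  have hdvd : N.minFac ∣ N := Nat.minFac_dvd N
  have hpa : N.minFac < a :=
    lt_of_pow_lt_pow_left₀ 2 (Nat.zero_le a)
      ((Nat.minFac_sq_le_self (by omega) hcomp).trans_lt hNa)
  rcases hp.eq_two_or_odd' with h | hodd
  · have hdiv : 2 ∣ c * k := by
      rw [hsum]
      exact dvd_add (h ▸ hdvd) (dvd_pow_self 2 (by omega))
    rcases Nat.prime_two.dvd_mul.mp hdiv with hd | hd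
    · rw [hc, Nat.prime_two.prime.dvd_finsetProd_iff] at hd
      obtain ⟨m, hm, hmd⟩ := hd
      have hm_odd := (Finset.mem_filter.mp hm).2
      grind
    · grind
  · have hpc : N.minFac ∣ c := by
      rw [hc]
      -- `p` and `a` are both odd, so `p < a` gives `p ≤ a - 2`.
      refine Finset.dvd_prod_of_mem (fun m => m)
        (Finset.mem_filter.mpr ⟨Finset.mem_range.mpr ?_, hodd⟩)
      grind
    have hpow : N.minFac ∣ 2 ^ n :=
      (Nat.dvd_add_right hdvd).mp (hsum ▸ hpc.mul_right k)
    have h := (Nat.prime_dvd_prime_iff_eq hp Nat.prime_two).mp (hp.dvd_of_dvd_pow hpow)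
    rw [h] at hodd
    exact absurd hodd (by decide)
end
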